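/- Let a, c ∈ ℝ and set Q(t) = at² − t + c. On an open set U ⊆ ℝ² where R¹ + R² ≠ 0, R¹ − R² > 0, Q(R¹) > 0 and Q(R²) < 0, consider the metric with inverse coefficients G¹¹ = (R¹ + R²)²Q(R¹)/(R¹ − R²) and G²² = −(R¹ + R²)²Q(R²)/(R¹ − R²). Then: (i) the coefficients defined by ∂₂G¹¹ = −2AG¹¹ and ∂₁G²² = −2BG²² are A = 1/(2(R² − R¹)) − 1/(R¹ + R²) and B = 1/(2(R¹ − R²)) − 1/(R¹ + R²), independent of a, c; and (ii) the constant-curvature-one condition (∂₂A + A²)G²² + (A/2)∂₂G²² + (∂₁B + B²)G¹¹ + (B/2)∂₁G¹¹ + 1 = 0 holds on U for all a, c. -/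

import Mathlib

/-- First partial derivative `∂₁ = ∂/∂R¹` of a function on `ℝ²`. -/
noncomputable def pd1 (f : ℝ × ℝ → ℝ) (p : ℝ × ℝ) : ℝ := fderiv ℝ f p (1, 0)

/-- Second partial derivative `∂₂ = ∂/∂R²` of a function on `ℝ²`. -/
noncomputable def pd2 (f : ℝ × ℝ → ℝ) (p : ℝ × ℝ) : ℝ := fderiv ℝ f p (0, 1)

lemma pd1_eq {f : ℝ × ℝ → ℝ} {x y d : ℝ} (hf : DifferentiableAt ℝ f (x, y))
    (h : HasDerivAt (fun t => f (t, y)) d x) : pd1 f (x, y) = d := by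
  have h1 : HasDerivAt (fun t : ℝ => ((t, y) : ℝ × ℝ)) ((1 : ℝ), (0 : ℝ)) x :=
    (hasDerivAt_id x).prodMk (hasDerivAt_const x y)
  have h2 := HasFDerivAt.comp_hasDerivAt (f := fun t : ℝ => ((t, y) : ℝ × ℝ)) x
    hf.hasFDerivAt h1
  exact h2.unique h

lemma pd2_eq {f : ℝ × ℝ → ℝ} {x y d : ℝ} (hf : DifferentiableAt ℝ f (x, y))
    (h : HasDerivAt (fun t => f (x, t)) d y) : pd2 f (x, y) = d := by
  have h1 : HasDerivAt (fun t : ℝ => ((x, t) : ℝ × ℝ)) ((0 : ℝ), (1 : ℝ)) y :=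
    (hasDerivAt_const y x).prodMk (hasDerivAt_id y)
  have h2 := HasFDerivAt.comp_hasDerivAt (f := fun t : ℝ => ((x, t) : ℝ × ℝ)) y
    hf.hasFDerivAt h1
  exact h2.unique h

/-- For the metric arising from planar ellipsoidal coordinates under
stereographic projection, with `G¹¹ = (R¹ + R²)²Q(R¹)/(R¹ − R²)`,
`G²² = −(R¹ + R²)²Q(R²)/(R¹ − R²)`, `Q(t) = at² − t + c`:
(i) `A = 1/(2(R² − R¹)) − 1/(R¹ + R²)`, `B = 1/(2(R¹ − R²)) − 1/(R¹ + R²)`,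
independent of `a, c`;
(ii) the constant-curvature-one condition holds for all `a, c`. -/
theorem ellipsoidal_stereographic (a c : ℝ) (Q : ℝ → ℝ)
    (hQ : ∀ t, Q t = a * t ^ 2 - t + c)
    (U : Set (ℝ × ℝ)) (hUopen : IsOpen U)
    (hU : ∀ p ∈ U, p.1 + p.2 ≠ 0 ∧ 0 < p.1 - p.2 ∧ 0 < Q p.1 ∧ Q p.2 < 0)
    (G11 G22 A B : ℝ × ℝ → ℝ)
    (hG11 : ∀ p : ℝ × ℝ, G11 p = (p.1 + p.2) ^ 2 * Q p.1 / (p.1 - p.2))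
    (hG22 : ∀ p : ℝ × ℝ, G22 p = -((p.1 + p.2) ^ 2 * Q p.2 / (p.1 - p.2)))
    (hA : ∀ p : ℝ × ℝ, A p = 1 / (2 * (p.2 - p.1)) - 1 / (p.1 + p.2))
    (hB : ∀ p : ℝ × ℝ, B p = 1 / (2 * (p.1 - p.2)) - 1 / (p.1 + p.2)) :
    (∀ p ∈ U, pd2 G11 p = -2 * A p * G11 p ∧ pd1 G22 p = -2 * B p * G22 p) ∧
    (∀ p ∈ U,
      (pd2 A p + A p ^ 2) * G22 p + A p / 2 * pd2 G22 p +
        (pd1 B p + B p ^ 2) * G11 p + B p / 2 * pd1 G11 p + 1 = 0) := by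
  obtain rfl : Q = fun t => a * t ^ 2 - t + c := funext hQ
  obtain rfl := funext hG11
  obtain rfl := funext hG22
  obtain rfl := funext hA
  obtain rfl := funext hB
  clear hQ hG11 hG22 hA hB
  have key : ∀ x y : ℝ, x + y ≠ 0 → x - y ≠ 0 → y - x ≠ 0 → _ ∧ _ ∧ _ ∧ _ ∧ _ ∧ _ :=
    fun x y hs hd hd' => by
    have q (t : ℝ) : HasDerivAt (fun t : ℝ => a * t ^ 2 - t + c) (2 * a * t - 1) t := by
      have := ((((hasDerivAt_id t).pow 2).const_mul a).sub (hasDerivAt_id t)).add_const c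
      refine HasDerivAt.congr_deriv (f := fun t : ℝ => a * t ^ 2 - t + c) this ?_
      simp only [id, Nat.cast_ofNat]
      ring
    have s1 : HasDerivAt (fun t : ℝ => t + y) 1 x := (hasDerivAt_id x).add_const y
    have s2 : HasDerivAt (fun t : ℝ => x + t) 1 y := (hasDerivAt_id y).const_add x
    have d1 : HasDerivAt (fun t : ℝ => t - y) 1 x := (hasDerivAt_id x).sub_const y
    have d2 : HasDerivAt (fun t : ℝ => x - t) (-1) y := (hasDerivAt_id y).const_sub x
    have e2 : HasDerivAt (fun t : ℝ => t - x) 1 y := (hasDerivAt_id y).sub_const x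
    have hd2 : 2 * (x - y) ≠ 0 := mul_ne_zero two_ne_zero hd
    have hd2' : 2 * (y - x) ≠ 0 := mul_ne_zero two_ne_zero hd'
    have D1 : DifferentiableAt ℝ (fun p : ℝ × ℝ =>
        (p.1 + p.2) ^ 2 * (a * p.1 ^ 2 - p.1 + c) / (p.1 - p.2)) (x, y) := by
      fun_prop (disch := assumption)
    have D2 : DifferentiableAt ℝ (fun p : ℝ × ℝ =>
        -((p.1 + p.2) ^ 2 * (a * p.2 ^ 2 - p.2 + c) / (p.1 - p.2))) (x, y) := by
      fun_prop (disch := assumption)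
    have DA : DifferentiableAt ℝ (fun p : ℝ × ℝ =>
        1 / (2 * (p.2 - p.1)) - 1 / (p.1 + p.2)) (x, y) := by
      fun_prop (disch := assumption)
    have DB : DifferentiableAt ℝ (fun p : ℝ × ℝ =>
        1 / (2 * (p.1 - p.2)) - 1 / (p.1 + p.2)) (x, y) := by
      fun_prop (disch := assumption)
    exact ⟨pd1_eq D1 (((s1.pow 2).mul (q x)).div d1 hd),
      pd2_eq D1 (((s2.pow 2).mul_const (a * x ^ 2 - x + c)).div d2 hd),
      pd1_eq D2 (((s1.pow 2).mul_const (a * y ^ 2 - y + c)).div d1 hd).neg,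
      pd2_eq D2 (((s2.pow 2).mul (q y)).div d2 hd).neg,
      pd2_eq DA (((hasDerivAt_const y (1:ℝ)).div (e2.const_mul 2) hd2').sub
        ((hasDerivAt_const y (1:ℝ)).div s2 hs)),
      pd1_eq DB (((hasDerivAt_const x (1:ℝ)).div (d1.const_mul 2) hd2).sub
        ((hasDerivAt_const x (1:ℝ)).div s1 hs))⟩
  constructor
  · rintro ⟨x, y⟩ hp
    obtain ⟨hs, hd, -, -⟩ := hU _ hp
    dsimp only at hs hd
    have hd0 := hd.ne'
    have hd' : y - x ≠ 0 := by intro h; apply hd0; linarith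
    obtain ⟨k1, k2, k3, k4, k5, k6⟩ := key x y hs hd0 hd'
    rw [k2, k3]
    have e : y - x = -(x - y) := by ring
    simp only [e, Pi.pow_apply, Pi.mul_apply]
    constructor
    · field_simp; ring
    · field_simp; ring
  · rintro ⟨x, y⟩ hp
    obtain ⟨hs, hd, -, -⟩ := hU _ hp
    dsimp only at hs hd
    have hd0 := hd.ne'
    have hd' : y - x ≠ 0 := by intro h; apply hd0; linarith
    obtain ⟨k1, k2, k3, k4, k5, k6⟩ := key x y hs hd0 hd'
    rw [k1, k4, k5, k6]
    have e : y - x = -(x - y) := by ring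
    simp only [e, Pi.pow_apply, Pi.mul_apply]
    field_simp
    ring
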